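/- arXiv:2404.03139 — 3 statements merged into one kernel-verified Lean document; each statement's English description precedes it below -/
import Mathlib

section
/- Fix a node i, a number of layers L ≥ 0, weight vectors w^{(0)}, …, w^{(L)} ∈ ℝ^d, and M ≥ 0, and suppose ⟨X_j, w^{(l)}⟩ is square-integrable with Var[⟨X_j, w^{(l)}⟩] ≤ M for all nodes j and all 0 ≤ l ≤ L. Define Z = Σ_{l=0}^{L} Σ_{j=1}^{N} (P_rw^l)_{ij} ⟨X_j, w^{(l)}⟩, the l-hop prediction homogeneity β^{(l)} = Σ_{j=1}^{N} (P_rw^l)_{ij} E[⟨X_j, w^{(l)}⟩], and the l-hop collision probability α^{(l)} = Σ_{j=1}^{N} ((P_rw^l)_{ij})². Then E[Z] = Σ_{l=0}^{L} β^{(l)}, Var[Z] ≤ M (L+1) Σ_{l=0}^{L} α^{(l)}, and consequently, if M > 0 and Var[Z] > 0, then R = (E[Z])² / Var[Z] ≥ (Σ_{l=0}^{L} β^{(l)})² / (M (L+1) Σ_{l=0}^{L} α^{(l)}). -/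
open MeasureTheory ProbabilityTheory Finset

theorem variance_sum_le_card_aux {Ω : Type*} [MeasurableSpace Ω] (μ : Measure Ω)
    [IsProbabilityMeasure μ] (s : Finset ℕ) (Y : ℕ → Ω → ℝ)
    (hY : ∀ l ∈ s, MemLp (Y l) 2 μ) :
    variance (fun ω => ∑ l ∈ s, Y l ω) μ ≤ (s.card : ℝ) * ∑ l ∈ s, variance (Y l) μ := by
  have hint : ∀ l ∈ s, Integrable (Y l) μ := fun l hl => (hY l hl).integrable one_le_two
  have hc : ∀ l ∈ s, MemLp (fun ω => Y l ω - ∫ x, Y l x ∂μ) 2 μ :=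
    fun l hl => (hY l hl).sub (memLp_const _)
  have hsq : ∀ l ∈ s, Integrable (fun ω => (Y l ω - ∫ x, Y l x ∂μ) ^ 2) μ :=
    fun l hl => (hc l hl).integrable_sq
  have hS : MemLp (fun ω => ∑ l ∈ s, Y l ω) 2 μ := memLp_finsetSum s hY
  rw [variance_eq_integral hS.aemeasurable]
  have h1 : ∑ l ∈ s, variance (Y l) μ
      = ∑ l ∈ s, ∫ ω, (Y l ω - ∫ x, Y l x ∂μ) ^ 2 ∂μ :=
    Finset.sum_congr rfl fun l hl => variance_eq_integral (hY l hl).aemeasurable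
  rw [h1, ← integral_finsetSum s hsq, ← integral_const_mul, integral_finsetSum s hint]
  refine integral_mono ?_ ((integrable_finsetSum s hsq).const_mul _) ?_
  · exact (hS.sub (memLp_const _)).integrable_sq
  · intro ω
    simp only [← Finset.sum_sub_distrib]
    exact sq_sum_le_card_mul_sum_sq

/-- Theorem 2, RW filter: lower bound on the squared inverse coefficient of
variation `R = (E[Z])²/Var[Z]` for the linearized random-walk GNN output at node `i`. -/
theorem rw_inverse_cv_bound {Ω : Type*} [MeasurableSpace Ω] (μ : Measure Ω)
    [IsProbabilityMeasure μ] {N d : ℕ}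
    (A : Matrix (Fin N) (Fin N) ℝ)
    (hA01 : ∀ i j, A i j = 0 ∨ A i j = 1)
    (hAsymm : A.IsSymm)
    (deg : Fin N → ℝ) (hdeg : ∀ i, deg i = ∑ j, A i j)
    (hdegpos : ∀ i, 0 < deg i)
    (Prw : Matrix (Fin N) (Fin N) ℝ) (hPrw : ∀ i j, Prw i j = A i j / deg i)
    (X : Fin N → Ω → Fin d → ℝ) (hXmeas : ∀ j, Measurable (X j))
    (hXindep : iIndepFun X μ)
    (i : Fin N) (L : ℕ) (w : ℕ → Fin d → ℝ) (M : ℝ) (hM : 0 ≤ M)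
    (hL2 : ∀ (j : Fin N) (l : ℕ), l ≤ L →
      MemLp (fun ω => ∑ k, X j ω k * w l k) 2 μ)
    (hvar : ∀ (j : Fin N) (l : ℕ), l ≤ L →
      variance (fun ω => ∑ k, X j ω k * w l k) μ ≤ M)
    (Z : Ω → ℝ)
    (hZ : ∀ ω, Z ω = ∑ l ∈ range (L + 1), ∑ j, (Prw ^ l) i j * ∑ k, X j ω k * w l k)
    (β : ℕ → ℝ)
    (hβ : ∀ l, β l = ∑ j, (Prw ^ l) i j * ∫ ω, (∑ k, X j ω k * w l k) ∂μ)
    (α : ℕ → ℝ)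
    (hα : ∀ l, α l = ∑ j, ((Prw ^ l) i j) ^ 2) :
    (∫ ω, Z ω ∂μ) = ∑ l ∈ range (L + 1), β l ∧
    variance Z μ ≤ M * (L + 1 : ℝ) * ∑ l ∈ range (L + 1), α l ∧
    (0 < M → 0 < variance Z μ →
      (∫ ω, Z ω ∂μ) ^ 2 / variance Z μ ≥
        (∑ l ∈ range (L + 1), β l) ^ 2 /
          (M * (L + 1 : ℝ) * ∑ l ∈ range (L + 1), α l)) := by
  have hle : ∀ l ∈ range (L + 1), l ≤ L := fun l hl => by
    have := Finset.mem_range.1 hl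
    omega
  have hZ' : Z = fun ω => ∑ l ∈ range (L + 1),
      (fun ω => ∑ j, (Prw ^ l) i j * ∑ k, X j ω k * w l k) ω := funext hZ
  have hm : ∀ l ∈ range (L + 1), ∀ j,
      MemLp (fun ω => (Prw ^ l) i j * ∑ k, X j ω k * w l k) 2 μ :=
    fun l hl j => (hL2 j l (hle l hl)).const_mul _
  have hmY : ∀ l ∈ range (L + 1),
      MemLp (fun ω => ∑ j, (Prw ^ l) i j * ∑ k, X j ω k * w l k) 2 μ :=
    fun l hl => memLp_finsetSum _ fun j _ => hm l hl j
  have hE : (∫ ω, Z ω ∂μ) = ∑ l ∈ range (L + 1), β l := by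
    rw [hZ', integral_finsetSum _ fun l hl => (hmY l hl).integrable one_le_two]
    refine Finset.sum_congr rfl fun l hl => ?_
    rw [integral_finsetSum _ fun j _ => (hm l hl j).integrable one_le_two, hβ]
    simp only [integral_const_mul]
  have hV : variance Z μ ≤ M * (L + 1 : ℝ) * ∑ l ∈ range (L + 1), α l := by
    have h1 := variance_sum_le_card_aux μ (range (L + 1))
      (fun l ω => ∑ j, (Prw ^ l) i j * ∑ k, X j ω k * w l k) hmY
    rw [← hZ', Finset.card_range] at h1
    have h2 : ∀ l ∈ range (L + 1),
        variance (fun ω => ∑ j, (Prw ^ l) i j * ∑ k, X j ω k * w l k) μ ≤ M * α l := by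
      intro l hl
      have hind : iIndepFun (fun j ω => (Prw ^ l) i j * ∑ k, X j ω k * w l k) μ :=
        hXindep.comp (fun j x => (Prw ^ l) i j * ∑ k, x k * w l k) (fun j => by fun_prop)
      have h3 := IndepFun.variance_sum (μ := μ) (s := Finset.univ)
        (X := fun j ω => (Prw ^ l) i j * ∑ k, X j ω k * w l k)
        (fun j _ => hm l hl j) (fun a _ b _ hab => hind.indepFun hab)
      have h4 : (∑ j, fun ω => (Prw ^ l) i j * ∑ k, X j ω k * w l k)
          = fun ω => ∑ j, (Prw ^ l) i j * ∑ k, X j ω k * w l k := by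
        ext ω
        simp only [Finset.sum_apply]
      rw [h4] at h3
      rw [h3, hα, Finset.mul_sum]
      refine Finset.sum_le_sum fun j _ => ?_
      rw [variance_const_mul, mul_comm]
      exact mul_le_mul_of_nonneg_right (hvar j l (hle l hl)) (sq_nonneg _)
    calc variance Z μ ≤ _ := h1
      _ ≤ ((L + 1 : ℕ) : ℝ) * ∑ l ∈ range (L + 1), M * α l :=
        mul_le_mul_of_nonneg_left (Finset.sum_le_sum h2) (Nat.cast_nonneg _)
      _ = _ := by
        rw [← Finset.mul_sum]
        push_cast
        ring
  refine ⟨hE, hV, fun _ hpos => ?_⟩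
  rw [hE]
  exact div_le_div_of_nonneg_left (sq_nonneg _) hpos hV
end

section
/- Fix a node i, a number of layers L ≥ 0, weight vectors w^{(0)}, …, w^{(L)} ∈ ℝ^d, and M ≥ 0, and suppose ⟨X_j, w^{(l)}⟩ is square-integrable with Var[⟨X_j, w^{(l)}⟩] ≤ M for all nodes j and all 0 ≤ l ≤ L. Define Z = Σ_{l=0}^{L} Σ_{j=1}^{N} (P_sym^l)_{ij} ⟨X_j, w^{(l)}⟩, the degree-discounted l-hop prediction homogeneity β̃^{(l)} = Σ_{j=1}^{N} (P_rw^l)_{ij} D_{jj}^{-1/2} E[⟨X_j, w^{(l)}⟩], and the degree-discounted sum of collision probabilities α̃^{(l)} = Σ_{j=1}^{N} D_{jj}^{-1} ((P_rw^l)_{ij})². Then E[Z] = √(D_{ii}) Σ_{l=0}^{L} β̃^{(l)}, Var[Z] ≤ D_{ii} M (L+1) Σ_{l=0}^{L} α̃^{(l)}, and consequently, if M > 0 and Var[Z] > 0, then R = (E[Z])² / Var[Z] ≥ (Σ_{l=0}^{L} β̃^{(l)})² / (M (L+1) Σ_{l=0}^{L} α̃^{(l)}). -/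
open MeasureTheory ProbabilityTheory Finset

theorem aux_var_sum_le {Ω : Type*} [MeasurableSpace Ω] (μ : Measure Ω)
    [IsProbabilityMeasure μ] (n : ℕ) (f : ℕ → Ω → ℝ) (hf : ∀ l ∈ range n, MemLp (f l) 2 μ) :
    variance (fun ω => ∑ l ∈ range n, f l ω) μ ≤ n * ∑ l ∈ range n, variance (f l) μ := by
  have hsum : MemLp (fun ω => ∑ l ∈ range n, f l ω) 2 μ := memLp_finsetSum _ hf
  rw [variance_eq_integral hsum.aemeasurable]
  have h1 : ∀ l ∈ range n, Integrable (fun ω => (f l ω - ∫ x, f l x ∂μ) ^ 2) μ := by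
    intro l hl
    exact ((hf l hl).sub (memLp_const _)).integrable_sq
  have h2 : ∫ x, (∑ l ∈ range n, f l x) ∂μ = ∑ l ∈ range n, ∫ x, f l x ∂μ :=
    integral_finsetSum _ (fun l hl => (hf l hl).integrable (by norm_num))
  have h3 : ∑ l ∈ range n, variance (f l) μ
      = ∫ ω, ∑ l ∈ range n, (f l ω - ∫ x, f l x ∂μ) ^ 2 ∂μ := by
    rw [integral_finsetSum _ h1]
    exact Finset.sum_congr rfl (fun l hl => variance_eq_integral (hf l hl).aemeasurable)
  rw [h3, ← integral_const_mul]
  apply integral_mono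
  · exact (hsum.sub (memLp_const _)).integrable_sq
  · exact (integrable_finsetSum _ h1).const_mul _
  · intro ω
    simp only
    rw [h2, ← Finset.sum_sub_distrib]
    simpa using sq_sum_le_card_mul_sum_sq (s := range n) (f := fun l => f l ω - ∫ x, f l x ∂μ)

theorem aux_pow {N : ℕ} (A Prw Psym : Matrix (Fin N) (Fin N) ℝ) (deg : Fin N → ℝ)
    (hdegpos : ∀ i, 0 < deg i) (hPrw : ∀ i j, Prw i j = A i j / deg i)
    (hPsym : ∀ i j, Psym i j = A i j / (Real.sqrt (deg i) * Real.sqrt (deg j))) (l : ℕ) :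
    ∀ i j, (Psym ^ l) i j = Real.sqrt (deg i) * ((Prw ^ l) i j * (Real.sqrt (deg j))⁻¹) := by
  have hs : ∀ i, Real.sqrt (deg i) ≠ 0 := fun i => (Real.sqrt_pos.2 (hdegpos i)).ne'
  induction l with
  | zero =>
    intro i j
    by_cases h : i = j
    · subst h; simp [hs]
    · simp [Matrix.one_apply_ne h]
  | succ l ih =>
    intro i j
    rw [pow_succ, pow_succ, Matrix.mul_apply, Matrix.mul_apply, Finset.sum_mul, Finset.mul_sum]
    refine Finset.sum_congr rfl (fun k _ => ?_)
    rw [ih, hPsym, hPrw]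
    have h := hs k
    have h' := hs j
    have e : deg k = Real.sqrt (deg k) * Real.sqrt (deg k) :=
      (Real.mul_self_sqrt (hdegpos k).le).symm
    generalize Real.sqrt (deg k) = s at *
    rw [e]
    field_simp

theorem aux_final (D B K V : ℝ) (hD : 0 < D) (hV0 : 0 < V) (hV : V ≤ D * K) :
    (Real.sqrt D * B) ^ 2 / V ≥ B ^ 2 / K := by
  have hKpos : 0 < K := (pos_iff_pos_of_mul_pos (hV0.trans_le hV)).1 hD
  rw [mul_pow, Real.sq_sqrt hD.le, ge_iff_le, div_le_div_iff₀ hKpos hV0]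
  nlinarith [mul_le_mul_of_nonneg_left hV (sq_nonneg B)]

theorem aux_meas {d : ℕ} (n : ℕ) (c : ℕ → ℝ) (w : ℕ → Fin d → ℝ) :
    Measurable (fun x : Fin d → ℝ => ∑ l ∈ range n, c l * ∑ k, x k * w l k) := by
  fun_prop

/-- Theorem 3, SYM filter: lower bound on the squared inverse coefficient of
variation `R = (E[Z])²/Var[Z]` for the linearized symmetric-normalized GNN output at node
`i`, in terms of the degree-discounted prediction homogeneities and collision
probabilities. -/
theorem sym_inverse_cv_bound {Ω : Type*} [MeasurableSpace Ω] (μ : Measure Ω)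
    [IsProbabilityMeasure μ] {N d : ℕ}
    (A : Matrix (Fin N) (Fin N) ℝ)
    (hA01 : ∀ i j, A i j = 0 ∨ A i j = 1)
    (hAsymm : A.IsSymm)
    (deg : Fin N → ℝ) (hdeg : ∀ i, deg i = ∑ j, A i j)
    (hdegpos : ∀ i, 0 < deg i)
    (Prw : Matrix (Fin N) (Fin N) ℝ) (hPrw : ∀ i j, Prw i j = A i j / deg i)
    (Psym : Matrix (Fin N) (Fin N) ℝ)
    (hPsym : ∀ i j, Psym i j = A i j / (Real.sqrt (deg i) * Real.sqrt (deg j)))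
    (X : Fin N → Ω → Fin d → ℝ) (hXmeas : ∀ j, Measurable (X j))
    (hXindep : iIndepFun X μ)
    (i : Fin N) (L : ℕ) (w : ℕ → Fin d → ℝ) (M : ℝ) (hM : 0 ≤ M)
    (hL2 : ∀ (j : Fin N) (l : ℕ), l ≤ L →
      MemLp (fun ω => ∑ k, X j ω k * w l k) 2 μ)
    (hvar : ∀ (j : Fin N) (l : ℕ), l ≤ L →
      variance (fun ω => ∑ k, X j ω k * w l k) μ ≤ M)
    (Z : Ω → ℝ)
    (hZ : ∀ ω, Z ω = ∑ l ∈ range (L + 1), ∑ j, (Psym ^ l) i j * ∑ k, X j ω k * w l k)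
    (β : ℕ → ℝ)
    (hβ : ∀ l, β l = ∑ j, (Prw ^ l) i j * (Real.sqrt (deg j))⁻¹ *
      ∫ ω, (∑ k, X j ω k * w l k) ∂μ)
    (α : ℕ → ℝ)
    (hα : ∀ l, α l = ∑ j, (deg j)⁻¹ * ((Prw ^ l) i j) ^ 2) :
    (∫ ω, Z ω ∂μ) = Real.sqrt (deg i) * ∑ l ∈ range (L + 1), β l ∧
    variance Z μ ≤ deg i * M * (L + 1 : ℝ) * ∑ l ∈ range (L + 1), α l ∧
    (0 < M → 0 < variance Z μ →
      (∫ ω, Z ω ∂μ) ^ 2 / variance Z μ ≥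
        (∑ l ∈ range (L + 1), β l) ^ 2 /
          (M * (L + 1 : ℝ) * ∑ l ∈ range (L + 1), α l)) := by
  have hpow := fun l => aux_pow A Prw Psym deg hdegpos hPrw hPsym l i
  have hint : ∀ (j : Fin N) (l : ℕ), l ∈ range (L + 1) →
      MemLp (fun ω => (Psym ^ l) i j * ∑ k, X j ω k * w l k) 2 μ := fun j l hl =>
    (hL2 j l (by simpa [Nat.lt_succ_iff] using hl)).const_mul _
  have hE : (∫ ω, Z ω ∂μ) = Real.sqrt (deg i) * ∑ l ∈ range (L + 1), β l := by
    simp_rw [hZ]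
    rw [integral_finsetSum _ (fun l hl => integrable_finsetSum _
      (fun j _ => (hint j l hl).integrable (by norm_num))), Finset.mul_sum]
    refine Finset.sum_congr rfl (fun l hl => ?_)
    rw [integral_finsetSum _ (fun j _ => (hint j l hl).integrable (by norm_num)), hβ,
      Finset.mul_sum]
    refine Finset.sum_congr rfl (fun j _ => ?_)
    rw [integral_const_mul, hpow]
    ring
  have hV : variance Z μ ≤ deg i * M * (L + 1 : ℝ) * ∑ l ∈ range (L + 1), α l := by
    have hZ' : Z = ∑ j, fun ω => ∑ l ∈ range (L + 1), (Psym ^ l) i j * ∑ k, X j ω k * w l k := by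
      funext ω
      rw [hZ, Finset.sum_comm, Finset.sum_apply]
    rw [hZ', IndepFun.variance_sum (fun j _ => memLp_finsetSum _ (hint j))]
    · have hb : ∀ j, variance (fun ω => ∑ l ∈ range (L + 1),
          (Psym ^ l) i j * ∑ k, X j ω k * w l k) μ
          ≤ ∑ l ∈ range (L + 1), deg i * M * (L + 1 : ℝ) * ((deg j)⁻¹ * ((Prw ^ l) i j) ^ 2) := by
        intro j
        refine (aux_var_sum_le μ (L + 1) _ (hint j)).trans ?_
        rw [Finset.mul_sum]
        refine Finset.sum_le_sum (fun l hl => ?_)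
        rw [variance_const_mul, hpow, mul_pow, mul_pow, inv_pow, Real.sq_sqrt (hdegpos i).le,
          Real.sq_sqrt (hdegpos j).le]
        have h := hvar j l (by simpa [Nat.lt_succ_iff] using hl)
        have hi := hdegpos i
        have hj := hdegpos j
        calc _ = (deg i * (L + 1 : ℝ) * ((deg j)⁻¹ * ((Prw ^ l) i j) ^ 2)) *
              variance (fun ω => ∑ k, X j ω k * w l k) μ := by push_cast; ring
          _ ≤ (deg i * (L + 1 : ℝ) * ((deg j)⁻¹ * ((Prw ^ l) i j) ^ 2)) * M :=
            mul_le_mul_of_nonneg_left h (by positivity)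
          _ = _ := by ring
      refine (Finset.sum_le_sum (fun j _ => hb j)).trans (le_of_eq ?_)
      rw [Finset.sum_comm, Finset.mul_sum]
      refine Finset.sum_congr rfl (fun l _ => ?_)
      rw [hα, Finset.mul_sum]
    · intro j _ j' _ hjj
      exact (hXindep.indepFun hjj).comp
        (aux_meas (L + 1) (fun l => (Psym ^ l) i j) w)
        (aux_meas (L + 1) (fun l => (Psym ^ l) i j') w)
  refine ⟨hE, hV, fun hM0 hV0 => ?_⟩
  rw [hE]
  exact aux_final _ _ _ _ (hdegpos i) hV0 (hV.trans_eq (by ring))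
end

section
/- Fix a node i, an integer l ≥ 0, and a vector w ∈ ℝ^d such that each ⟨X_j, w⟩ is square-integrable. Then E[Σ_{j=1}^{N} (P_sym^l)_{ij} ⟨X_j, w⟩] = √(D_{ii}) Σ_{j=1}^{N} (P_rw^l)_{ij} D_{jj}^{-1/2} E[⟨X_j, w⟩], and if moreover Var[⟨X_j, w⟩] ≤ M for all j, then Var[Σ_{j=1}^{N} (P_sym^l)_{ij} ⟨X_j, w⟩] ≤ D_{ii} · M · Σ_{j=1}^{N} D_{jj}^{-1} ((P_rw^l)_{ij})². -/
open MeasureTheory ProbabilityTheory Finset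

/-- for a single layer `l` of the symmetric-normalized filter, the
expectation of `Σ_j (P_sym^l)_{ij} ⟨X_j, w⟩` equals
`√(D_ii) Σ_j (P_rw^l)_{ij} D_jj^{-1/2} E[⟨X_j, w⟩]`, and if each `Var[⟨X_j, w⟩] ≤ M`
then its variance is at most `D_ii · M · Σ_j D_jj^{-1} ((P_rw^l)_{ij})²`. -/
theorem sym_layer_mean_variance {Ω : Type*} [MeasurableSpace Ω] (μ : Measure Ω)
    [IsProbabilityMeasure μ] {N d : ℕ}
    (A : Matrix (Fin N) (Fin N) ℝ)
    (hA01 : ∀ i j, A i j = 0 ∨ A i j = 1)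
    (hAsymm : A.IsSymm)
    (deg : Fin N → ℝ) (hdeg : ∀ i, deg i = ∑ j, A i j)
    (hdegpos : ∀ i, 0 < deg i)
    (Prw : Matrix (Fin N) (Fin N) ℝ) (hPrw : ∀ i j, Prw i j = A i j / deg i)
    (Psym : Matrix (Fin N) (Fin N) ℝ)
    (hPsym : ∀ i j, Psym i j = A i j / (Real.sqrt (deg i) * Real.sqrt (deg j)))
    (X : Fin N → Ω → Fin d → ℝ) (hXmeas : ∀ j, Measurable (X j))
    (hXindep : iIndepFun X μ)
    (i : Fin N) (l : ℕ) (w : Fin d → ℝ)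
    (hL2 : ∀ j : Fin N, MemLp (fun ω => ∑ k, X j ω k * w k) 2 μ) :
    (∫ ω, (∑ j, (Psym ^ l) i j * ∑ k, X j ω k * w k) ∂μ) =
      Real.sqrt (deg i) *
        ∑ j, (Prw ^ l) i j * (Real.sqrt (deg j))⁻¹ * ∫ ω, (∑ k, X j ω k * w k) ∂μ ∧
    ∀ M : ℝ, (∀ j : Fin N, variance (fun ω => ∑ k, X j ω k * w k) μ ≤ M) →
      variance (fun ω => ∑ j, (Psym ^ l) i j * ∑ k, X j ω k * w k) μ ≤
        deg i * M * ∑ j, (deg j)⁻¹ * ((Prw ^ l) i j) ^ 2 := by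
  have key : ∀ (n : ℕ) (a b : Fin N), (Psym ^ n) a b =
      Real.sqrt (deg a) * ((Prw ^ n) a b * (Real.sqrt (deg b))⁻¹) := by
    have hs : ∀ a, Real.sqrt (deg a) ≠ 0 := fun a => (Real.sqrt_pos.2 (hdegpos a)).ne'
    intro n
    induction n with
    | zero =>
      intro a b
      by_cases h : a = b
      · subst h
        simp [hs a]
      · simp [Matrix.one_apply_ne h]
    | succ n ih =>
      intro a b
      rw [pow_succ, pow_succ, Matrix.mul_apply, Matrix.mul_apply, Finset.sum_mul, Finset.mul_sum]
      refine Finset.sum_congr rfl fun c _ => ?_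
      rw [ih, hPsym, hPrw]
      have h1 := hs b
      have h2 := hs c
      have h3 : deg c = Real.sqrt (deg c) * Real.sqrt (deg c) :=
        (Real.mul_self_sqrt (hdegpos c).le).symm
      have h4 : A c b / deg c = A c b / (Real.sqrt (deg c) * Real.sqrt (deg c)) := by
        rw [← h3]
      rw [h4]
      field_simp
  constructor
  · rw [integral_finsetSum _ fun j _ => ((hL2 j).integrable (by norm_num)).const_mul _,
      Finset.mul_sum]
    refine Finset.sum_congr rfl fun j _ => ?_
    rw [integral_const_mul, key]
    ring
  · intro M hM
    have hind : iIndepFun (fun j ω => (Psym ^ l) i j * ∑ k, X j ω k * w k) μ := by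
      refine hXindep.comp (fun j x => (Psym ^ l) i j * ∑ k, x k * w k) fun j => ?_
      fun_prop
    have hv : variance (fun ω => ∑ j, (Psym ^ l) i j * ∑ k, X j ω k * w k) μ =
        ∑ j, variance (fun ω => (Psym ^ l) i j * ∑ k, X j ω k * w k) μ := by
      have := IndepFun.variance_sum (μ := μ) (s := Finset.univ)
        (X := fun j ω => (Psym ^ l) i j * ∑ k, X j ω k * w k)
        (fun j _ => (hL2 j).const_mul _) (fun a _ b _ hab => hind.indepFun hab)
      rw [← this]
      congr 1
      ext ω
      simp
    rw [hv, Finset.mul_sum]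
    refine Finset.sum_le_sum fun j _ => ?_
    rw [variance_const_mul]
    have hc : (Psym ^ l) i j ^ 2 = deg i * ((deg j)⁻¹ * ((Prw ^ l) i j) ^ 2) := by
      rw [key, mul_pow, mul_pow, inv_pow, Real.sq_sqrt (hdegpos i).le,
        Real.sq_sqrt (hdegpos j).le]
      ring
    calc _ ≤ (Psym ^ l) i j ^ 2 * M := mul_le_mul_of_nonneg_left (hM j) (sq_nonneg _)
      _ = _ := by rw [hc]; ring
end
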